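/- Let c ≠ 0 and set s₀ = (c² + √(c⁴ + 16))/2, so that s₀ > 2. Then F₁(s₀, 0; 0) = 0 and F₂(s₀, 0; 0) = 0, and there exist ε > 0, δ > 0 and differentiable functions A ↦ s(A), A ↦ d(A) defined for |A| < ε such that s(0) = s₀, d(0) = 0, F₁(s(A), d(A); A) = 0 and F₂(s(A), d(A); A) = 0 for all |A| < ε, and moreover for each |A| < ε the point (s(A), d(A)) is the unique solution of F₁ = F₂ = 0 in the δ-ball around (s₀, 0). -/

import Mathlib

/-- $F_1(s,d;A) = (d^2-4)^2(s^2-4)(3Ad+s) + 16c^2(d^2-s^2)$, where $c$ is the angular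
momentum. -/
noncomputable def F₁ (c A s d : ℝ) : ℝ :=
  (d ^ 2 - 4) ^ 2 * (s ^ 2 - 4) * (3 * A * d + s) + 16 * c ^ 2 * (d ^ 2 - s ^ 2)

/-- $F_2(s,d;A) = 3As + d + \frac34 A (d^2-s^2)\ln\frac{s+2}{s-2}$. -/
noncomputable def F₂ (A s d : ℝ) : ℝ :=
  3 * A * s + d + (3 / 4) * A * (d ^ 2 - s ^ 2) * Real.log ((s + 2) / (s - 2))

/-!
At `A = 0` the equations decouple: the second reads `d = 0`, and the first, on `d = 0`, reduces to
`s ^ 2 = c ^ 2 * s + 4`, whose positive root is `s₀`. There the Jacobian in `(s, d)` is the diagonal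
matrix with entries `16 * (s₀ ^ 2 + 4)` and `1`, so the implicit function theorem applies.
-/

open Filter Topology
open scoped ContDiff

section

variable {𝕜 : Type*} [NontriviallyNormedField 𝕜]
  {E₁ : Type*} [NormedAddCommGroup E₁] [NormedSpace 𝕜 E₁]
  {E₂ : Type*} [NormedAddCommGroup E₂] [NormedSpace 𝕜 E₂]
  {F : Type*} [NormedAddCommGroup F] [NormedSpace 𝕜 F]

theorem fderiv_comp_inr_eq_of_hasFDerivAt {f : E₁ × E₂ → F} {u : E₁ × E₂} {f₂' : E₂ →L[𝕜] F}
    (hf : DifferentiableAt 𝕜 f u) (hf₂ : HasFDerivAt (fun y ↦ f (u.1, y)) f₂' u.2) :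
    fderiv 𝕜 f u ∘L .inr 𝕜 E₁ E₂ = f₂' :=
  (hf.hasFDerivAt.comp u.2 (hasFDerivAt_prodMk_right u.1 u.2)).unique hf₂

theorem isInvertible_smul_fst_prod_snd {a : 𝕜} (ha : a ≠ 0) :
    ((a • ContinuousLinearMap.fst 𝕜 E₁ E₂).prod (.snd 𝕜 E₁ E₂)).IsInvertible :=
  ⟨(ContinuousLinearEquiv.smulLeft (Units.mk0 a ha)).prodCongr (.refl 𝕜 E₂), by ext <;> simp⟩

end

theorem hasBasis_nhds_prod_l2 {E₁ E₂ : Type*} [SeminormedAddCommGroup E₁]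
    [SeminormedAddCommGroup E₂] (a : E₁) (b : E₂) :
    (𝓝 (a, b)).HasBasis (fun r : ℝ ↦ 0 < r)
      fun r ↦ {x | √(‖x.1 - a‖ ^ 2 + ‖x.2 - b‖ ^ 2) < r} := by
  have hball := (Metric.nhds_basis_ball (x := WithLp.toLp 2 (a, b))).comap (WithLp.toLp 2)
  have hnhds : 𝓝 (a, b) = comap (WithLp.toLp 2) (𝓝 (WithLp.toLp 2 (a, b))) :=
    (WithLp.homeomorphProd 2 E₁ E₂).symm.nhds_eq_comap (a, b)
  rw [← hnhds] at hball
  simpa [Metric.ball, dist_eq_norm, WithLp.prod_norm_eq_of_L2] using hball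

theorem exists_eventually_implicitFunction_unique {𝕜 : Type*} [RCLike 𝕜]
    {E₁ : Type*} [NormedAddCommGroup E₁] [NormedSpace 𝕜 E₁] [CompleteSpace E₁]
    {E₂ : Type*} [NormedAddCommGroup E₂] [NormedSpace 𝕜 E₂] [CompleteSpace E₂]
    {F : Type*} [NormedAddCommGroup F] [NormedSpace 𝕜 F] [CompleteSpace F]
    {f : E₁ × E₂ → F} {u : E₁ × E₂} {n : ℕ∞ω} (hf : ContDiffAt 𝕜 n f u) (hn : n ≠ 0)
    (hn' : n ≠ ∞) (hf₂ : (fderiv 𝕜 f u ∘L .inr 𝕜 E₁ E₂).IsInvertible)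
    {ι : Type*} {p : ι → Prop} {B : ι → Set E₂} (hB : (𝓝 u.2).HasBasis p B) :
    ∃ ψ : E₁ → E₂, ψ u.1 = u.2 ∧ ∃ i, p i ∧ ∀ᶠ x in 𝓝 u.1,
      ContDiffAt 𝕜 n ψ x ∧ ψ x ∈ B i ∧ ∀ y ∈ B i, f (x, y) = f u ↔ ψ x = y := by
  set ψ := hf.implicitFunction hn hf₂
  have hψ : ContDiffAt 𝕜 n ψ u.1 := hf.contDiffAt_implicitFunction hn hf₂
  have hψu : ψ u.1 = u.2 := hf.implicitFunction_apply_self hn hf₂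
  have hlocal : ∀ᶠ v in 𝓝 u.1 ×ˢ 𝓝 u.2, f v = f u ↔ ψ v.1 = v.2 := by
    rw [← nhds_prod_eq]
    exact hf.eventually_apply_eq_iff_implicitFunction hn hf₂
  obtain ⟨P, hP, Q, hQ, hPQ⟩ := eventually_prod_iff.1 hlocal
  obtain ⟨i, hi, hiQ⟩ := hB.eventually_iff.1 hQ
  have hmem : ∀ᶠ x in 𝓝 u.1, ψ x ∈ B i :=
    hψ.continuousAt.eventually_mem (hψu ▸ hB.mem_of_mem hi)
  refine ⟨ψ, hψu, i, hi, ?_⟩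
  filter_upwards [hP, hψ.eventually hn', hmem] with x hx hψx hxB
  exact ⟨hψx, hxB, fun y hy ↦ hPQ hx (hiQ hy)⟩

/-- The pair `(F₁, F₂)` as a function of `(A, (s, d))`, so that the circular orbits are its zeros
and the implicit function theorem solves for `(s, d)` in terms of the parameter `A`. -/
noncomputable def orbitMap (c : ℝ) (v : ℝ × ℝ × ℝ) : ℝ × ℝ :=
  (F₁ c v.1 v.2.1 v.2.2, F₂ v.1 v.2.1 v.2.2)

/-- The value `s₀` of `s` on the circular orbit of angular momentum `c` around the segment of
constant density, i.e. for `A = 0`. -/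
noncomputable def uniformOrbit (c : ℝ) : ℝ :=
  (c ^ 2 + √(c ^ 4 + 16)) / 2

theorem uniformOrbit_sq (c : ℝ) : uniformOrbit c ^ 2 = c ^ 2 * uniformOrbit c + 4 := by
  have hsqrt : √(c ^ 4 + 16) ^ 2 = c ^ 4 + 16 := Real.sq_sqrt (by positivity)
  unfold uniformOrbit
  linear_combination hsqrt / 4

theorem two_lt_uniformOrbit {c : ℝ} (hc : c ≠ 0) : 2 < uniformOrbit c := by
  have hc₂ : 0 < c ^ 2 := by positivity
  have hc₄ : 0 < c ^ 4 := by positivity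
  have hsqrt : 4 < √(c ^ 4 + 16) := Real.lt_sqrt_of_sq_lt (by linarith)
  unfold uniformOrbit
  linarith

theorem F₁_zero (c s d : ℝ) :
    F₁ c 0 s d = (d ^ 2 - 4) ^ 2 * (s ^ 2 - 4) * s + 16 * c ^ 2 * (d ^ 2 - s ^ 2) := by
  simp [F₁]

theorem F₁_zero_zero_eq_zero {c s : ℝ} (hs : s ^ 2 = c ^ 2 * s + 4) : F₁ c 0 s 0 = 0 := by
  rw [F₁_zero]
  linear_combination 16 * s * hs

theorem F₂_zero (s d : ℝ) : F₂ 0 s d = d := by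
  simp [F₂]

theorem contDiffAt_orbitMap {n : ℕ∞ω} {c A s d : ℝ} (hs : 2 < s) :
    ContDiffAt ℝ n (orbitMap c) (A, s, d) := by
  have hlog : ContDiffAt ℝ n (fun v : ℝ × ℝ × ℝ ↦ Real.log ((v.2.1 + 2) / (v.2.1 - 2)))
      (A, s, d) := by
    have hsub : s - 2 ≠ 0 := by linarith
    have hdiv : (s + 2) / (s - 2) ≠ 0 := div_ne_zero (by linarith) hsub
    fun_prop (disch := assumption)
  unfold orbitMap F₁ F₂
  fun_prop

theorem hasFDerivAt_orbitMap_zero (c s : ℝ) :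
    HasFDerivAt (fun x ↦ orbitMap c (0, x))
      (((16 * (3 * s ^ 2 - 4) - 32 * c ^ 2 * s) • ContinuousLinearMap.fst ℝ ℝ ℝ).prod
        (.snd ℝ ℝ ℝ)) (s, 0) := by
  have hfst : HasFDerivAt (fun x : ℝ × ℝ ↦ x.1) (.fst ℝ ℝ ℝ) (s, 0) := hasFDerivAt_fst
  have hsnd : HasFDerivAt (fun x : ℝ × ℝ ↦ x.2) (.snd ℝ ℝ ℝ) (s, 0) := hasFDerivAt_snd
  have hF₁ := (((((hsnd.pow 2).sub_const 4).pow 2).mul ((hfst.pow 2).sub_const 4)).mul hfst).add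
    (((hsnd.pow 2).sub (hfst.pow 2)).const_mul (16 * c ^ 2))
  simp only [orbitMap, F₁_zero, F₂_zero]
  refine (hF₁.congr_fderiv ?_).prodMk hsnd
  ext
  · suffices 4 ^ 2 * (s ^ 2 - 4) + s * (4 ^ 2 * (2 * s)) + -(16 * c ^ 2 * (2 * s)) =
        16 * (3 * s ^ 2 - 4) - 32 * c ^ 2 * s by simpa
    ring
  · simp

theorem isInvertible_fderiv_orbitMap_comp_inr {c s : ℝ} (hs : 2 < s)
    (hroot : s ^ 2 = c ^ 2 * s + 4) :
    (fderiv ℝ (orbitMap c) (0, s, 0) ∘L .inr ℝ ℝ (ℝ × ℝ)).IsInvertible := by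
  have hdiff : DifferentiableAt ℝ (orbitMap c) (0, s, 0) :=
    (contDiffAt_orbitMap hs).differentiableAt one_ne_zero
  have hentry : 16 * (3 * s ^ 2 - 4) - 32 * c ^ 2 * s = 16 * (s ^ 2 + 4) := by
    linear_combination 32 * hroot
  rw [fderiv_comp_inr_eq_of_hasFDerivAt hdiff (hasFDerivAt_orbitMap_zero c s), hentry]
  exact isInvertible_smul_fst_prod_snd (by positivity)

/-- For $c \neq 0$ and $s_0 = (c^2 + \sqrt{c^4+16})/2 > 2$: $F_1(s_0,0;0) = 0$ and
$F_2(s_0,0;0) = 0$, and there exist $\varepsilon,\delta > 0$ and differentiable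
functions $A \mapsto s(A), d(A)$ on $|A| < \varepsilon$ with $s(0) = s_0$, $d(0) = 0$,
$F_1(s(A),d(A);A) = F_2(s(A),d(A);A) = 0$, and $(s(A),d(A))$ the unique common zero of
$F_1, F_2$ in the $\delta$-ball around $(s_0,0)$. -/
theorem circular_orbit_implicit_function (c : ℝ) (hc : c ≠ 0) (s₀ : ℝ)
    (hs₀ : s₀ = (c ^ 2 + Real.sqrt (c ^ 4 + 16)) / 2) :
    2 < s₀ ∧ F₁ c 0 s₀ 0 = 0 ∧ F₂ 0 s₀ 0 = 0 ∧
    ∃ ε > (0 : ℝ), ∃ δ > (0 : ℝ), ∃ sf df : ℝ → ℝ,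
      sf 0 = s₀ ∧ df 0 = 0 ∧
      (∀ A : ℝ, |A| < ε → DifferentiableAt ℝ sf A ∧ DifferentiableAt ℝ df A) ∧
      (∀ A : ℝ, |A| < ε → F₁ c A (sf A) (df A) = 0 ∧ F₂ A (sf A) (df A) = 0) ∧
      (∀ A : ℝ, |A| < ε →
        Real.sqrt ((sf A - s₀) ^ 2 + df A ^ 2) < δ ∧
        ∀ s d : ℝ, Real.sqrt ((s - s₀) ^ 2 + d ^ 2) < δ →
          F₁ c A s d = 0 → F₂ A s d = 0 → s = sf A ∧ d = df A) := by
  obtain rfl : s₀ = uniformOrbit c := hs₀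
  have hroot := uniformOrbit_sq c
  have hlt := two_lt_uniformOrbit hc
  have hF₁ := F₁_zero_zero_eq_zero hroot
  have hF₂ := F₂_zero (uniformOrbit c) 0
  have hbase : orbitMap c (0, uniformOrbit c, 0) = 0 := Prod.ext hF₁ hF₂
  obtain ⟨ψ, hψ₀, δ, hδ, hψ⟩ :=
    exists_eventually_implicitFunction_unique (contDiffAt_orbitMap (n := 1) hlt) one_ne_zero
      (by simp) (isInvertible_fderiv_orbitMap_comp_inr hlt hroot) (hasBasis_nhds_prod_l2 _ _)
  obtain ⟨ε, hε, hball⟩ := Metric.eventually_nhds_iff.1 hψ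
  simp only [hbase, Real.dist_eq, sub_zero, Real.norm_eq_abs, sq_abs, Set.mem_ofPred_eq] at hball
  refine ⟨hlt, hF₁, hF₂, ε, hε, δ, hδ, fun A ↦ (ψ A).1, fun A ↦ (ψ A).2,
    congrArg Prod.fst hψ₀, congrArg Prod.snd hψ₀, fun A hA ↦ ?_, fun A hA ↦ ?_, fun A hA ↦ ?_⟩ <;>
    obtain ⟨hdiff, hmem, huniq⟩ := hball hA
  · have hψA := hdiff.differentiableAt one_ne_zero
    exact ⟨hψA.fst, hψA.snd⟩
  · exact Prod.ext_iff.1 ((huniq (ψ A) hmem).2 rfl)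
  · refine ⟨hmem, fun s d hsd h₁ h₂ ↦ ?_⟩
    have hsol : ψ A = (s, d) := (huniq (s, d) hsd).1 (Prod.ext h₁ h₂)
    simp [hsol]
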